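/- Fix δ ∈ (0,1) and set ζ = √(log(2/δ)/(2N)). Assume that if G⁻(λ) < ρ then λ < M. Let D_1, …, D_N be i.i.d. samples from G, let S_i = min(D_i, λ), and let Ĝ⁻(λ) = (1/N)·Σ_{i=1}^N 1{S_i < λ}. Define the algorithm output q_alg as follows: if Ĝ⁻(λ) ≥ ρ + ζ, set q_alg = inf{x ∈ ℝ : (1/N)·Σ_{i=1}^N 1{S_i ≤ x} ≥ ρ}; if Ĝ⁻(λ) < ρ − ζ, set q_alg = (bM + hλ − (b+h)·Ĝ⁻(λ)·M)/((b+h)·(1 − Ĝ⁻(λ))); otherwise set q_alg = λ. Then with probability at least 1 − 2δ, the worst-case regret of q_alg satisfies: Regret(q_alg) ≤ Δ + λ(b+h)ζ if G⁻(λ) ≥ ρ + 2ζ; Regret(q_alg) ≤ Δ + 2λ(b+h)ζ if ρ ≤ G⁻(λ) < ρ + 2ζ; Regret(q_alg) ≤ Δ + 2·max(b/h, 1)·(M − λ)·(b+h)·ζ if ρ − 2ζ ≤ G⁻(λ) < ρ; and Regret(q_alg) ≤ Δ + max(b/h, 1)·(M − λ)·(b+h)·ζ if G⁻(λ) < ρ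 − 2ζ. -/

import Mathlib

open MeasureTheory Set

/-- Newsvendor cost of ordering quantity `q` under demand distribution `F`,
with underage cost `b` and overage cost `h`. -/
noncomputable def nvCost (b h : ℝ) (F : Measure ℝ) (q : ℝ) : ℝ :=
  ∫ x, (b * max (x - q) 0 + h * max (q - x) 0) ∂F

/-- Optimal newsvendor quantity: the `ρ`-th quantile of `F`. -/
noncomputable def qStar (ρ : ℝ) (F : Measure ℝ) : ℝ :=
  sInf {q : ℝ | ρ ≤ (F (Iic q)).toReal}

/-- The set `𝒢` of admissible demand distributions: Borel probability measures on ℝ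
supported on `[0, ∞)` with finite mean and optimal newsvendor quantity at most `M`. -/
def GoodDist (ρ M : ℝ) : Set (Measure ℝ) :=
  {F | IsProbabilityMeasure F ∧ F (Iio 0) = 0 ∧ Integrable id F ∧ qStar ρ F ≤ M}

/-- The ambiguity set `𝒜_λ`: all admissible distributions agreeing with `G` before `lam`. -/
def Ambig (ρ M : ℝ) (G : Measure ℝ) (lam : ℝ) : Set (Measure ℝ) :=
  {F | F ∈ GoodDist ρ M ∧ ∀ x < lam, F (Iic x) = G (Iic x)}

/-- Worst-case regret of an ordering quantity `q` over the ambiguity set. -/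
noncomputable def Regret (b h ρ M : ℝ) (G : Measure ℝ) (lam q : ℝ) : ℝ :=
  sSup ((fun F => nvCost b h F q - nvCost b h F (qStar ρ F)) '' Ambig ρ M G lam)

/-- Minimax risk `Δ`. -/
noncomputable def Risk (b h ρ M : ℝ) (G : Measure ℝ) (lam : ℝ) : ℝ :=
  sInf (Regret b h ρ M G lam '' Icc 0 M)

/-- The unidentifiable ordering quantity `q†_G`. -/
noncomputable def qDagger (b h M : ℝ) (G : Measure ℝ) (lam : ℝ) : ℝ :=
  (b * M + h * lam - (b + h) * (G (Iio lam)).toReal * M) /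
    ((b + h) * (1 - (G (Iio lam)).toReal))

/-- The two-point-tail distribution `F_p`: agrees with `G` on `[0, λ)`, places an atom
of mass `p` at `λ` and an atom of mass `1 - p - G⁻(λ)` at `M`. -/
noncomputable def Fp (G : Measure ℝ) (lam M p : ℝ) : Measure ℝ :=
  G.restrict (Iio lam) + ENNReal.ofReal p • Measure.dirac lam +
    ENNReal.ofReal (1 - p - (G (Iio lam)).toReal) • Measure.dirac M

/-- The `N`-fold product (i.i.d.) measure of `G` (equal to `Measure.pi` whenever `G`
is sigma-finite, in particular for probability measures). -/
noncomputable def iidPi (N : ℕ) (G : Measure ℝ) : Measure (Fin N → ℝ) := by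
  classical
  exact if h : SigmaFinite G then
    haveI := h
    Measure.pi fun _ => G
  else 0

/-- Censored empirical estimate `Ĝ⁻(λ)` from censored samples `min (d i) lam`. -/
noncomputable def ghat (lam : ℝ) {N : ℕ} (d : Fin N → ℝ) : ℝ :=
  (1 / (N : ℝ)) * ∑ i, (if min (d i) lam < lam then (1 : ℝ) else 0)

/-- Output of the Robust Censored Newsvendor algorithm. -/
noncomputable def qalg (b h M lam ρ ζ : ℝ) {N : ℕ} (d : Fin N → ℝ) : ℝ :=
  if ρ + ζ ≤ ghat lam d then
    sInf {x : ℝ | ρ ≤ (1 / (N : ℝ)) * ∑ i, (if min (d i) lam ≤ x then (1 : ℝ) else 0)}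
  else if ghat lam d < ρ - ζ then
    (b * M + h * lam - (b + h) * ghat lam d * M) / ((b + h) * (1 - ghat lam d))
  else lam

/-- The regime-dependent regret bound of Theorem 4.1. -/
noncomputable def rcnBound (b h M lam ρ ζ gm : ℝ) : ℝ :=
  if ρ + 2 * ζ ≤ gm then lam * (b + h) * ζ
  else if ρ ≤ gm then 2 * lam * (b + h) * ζ
  else if ρ - 2 * ζ ≤ gm then 2 * max (b / h) 1 * (M - lam) * (b + h) * ζ
  else max (b / h) 1 * (M - lam) * (b + h) * ζ


open ProbabilityTheory Filter Topology

lemma nv_int (b h : ℝ) (F : Measure ℝ) [IsProbabilityMeasure F] (hi : Integrable id F) (q : ℝ) :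
    Integrable (fun x : ℝ => b * max (x - q) 0 + h * max (q - x) 0) F := by
  have h1 : Integrable (fun x : ℝ => x - q) F := hi.sub (integrable_const q)
  have h2 : Integrable (fun x : ℝ => q - x) F := (integrable_const q).sub hi
  exact (h1.pos_part.const_mul b).add (h2.pos_part.const_mul h)

lemma nv_up (b h : ℝ) (hb : 0 < b) (hh : 0 < h) (F : Measure ℝ) [IsProbabilityMeasure F]
    (hi : Integrable id F) (q r : ℝ) (hqr : r ≤ q) :
    nvCost b h F q - nvCost b h F r ≤ (q - r) * ((b + h) * F.real (Iio q) - b) := by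
  unfold nvCost
  rw [← integral_sub (nv_int b h F hi q) (nv_int b h F hi r)]
  have hI : Integrable ((Iio q).indicator (fun _ : ℝ => (1 : ℝ))) F :=
    (integrable_const 1).indicator measurableSet_Iio
  have e : (q - r) * ((b + h) * F.real (Iio q) - b) =
      ∫ x, ((q - r) * ((b + h) * (Iio q).indicator (fun _ : ℝ => (1 : ℝ)) x - b)) ∂F := by
    rw [integral_const_mul, integral_sub (hI.const_mul _) (integrable_const _),
      integral_const_mul, integral_indicator_const _ measurableSet_Iio]
    simp
  rw [e]
  apply integral_mono ((nv_int b h F hi q).sub (nv_int b h F hi r))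
    (((hI.const_mul _).sub (integrable_const _)).const_mul _)
  intro x
  simp only [indicator, mem_Iio, Pi.sub_apply]
  split_ifs with hx
  · rw [max_eq_right (by linarith : x - q ≤ 0), max_eq_left (by linarith : 0 ≤ q - x)]
    rcases le_total x r with hr | hr
    · rw [max_eq_right (by linarith : x - r ≤ 0), max_eq_left (by linarith : 0 ≤ r - x)]
      linarith
    · rw [max_eq_left (by linarith : 0 ≤ x - r), max_eq_right (by linarith : r - x ≤ 0)]
      nlinarith
  · push Not at hx
    rw [max_eq_left (by linarith : 0 ≤ x - q), max_eq_right (by linarith : q - x ≤ 0),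
      max_eq_left (by linarith : 0 ≤ x - r), max_eq_right (by linarith : r - x ≤ 0)]
    linarith

lemma nv_dn (b h : ℝ) (hb : 0 < b) (hh : 0 < h) (F : Measure ℝ) [IsProbabilityMeasure F]
    (hi : Integrable id F) (q r : ℝ) (hqr : q ≤ r) :
    nvCost b h F q - nvCost b h F r ≤ (r - q) * (b - (b + h) * F.real (Iic q)) := by
  unfold nvCost
  rw [← integral_sub (nv_int b h F hi q) (nv_int b h F hi r)]
  have hI : Integrable ((Iic q).indicator (fun _ : ℝ => (1 : ℝ))) F :=
    (integrable_const 1).indicator measurableSet_Iic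
  have e : (r - q) * (b - (b + h) * F.real (Iic q)) =
      ∫ x, ((r - q) * (b - (b + h) * (Iic q).indicator (fun _ : ℝ => (1 : ℝ)) x)) ∂F := by
    rw [integral_const_mul, integral_sub (integrable_const _) (hI.const_mul _),
      integral_const_mul, integral_indicator_const _ measurableSet_Iic]
    simp
  rw [e]
  apply integral_mono ((nv_int b h F hi q).sub (nv_int b h F hi r))
    (((integrable_const _).sub (hI.const_mul _)).const_mul _)
  intro x
  simp only [indicator, mem_Iic, Pi.sub_apply]
  split_ifs with hx
  · rw [max_eq_right (by linarith : x - q ≤ 0), max_eq_left (by linarith : 0 ≤ q - x),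
      max_eq_right (by linarith : x - r ≤ 0), max_eq_left (by linarith : 0 ≤ r - x)]
    linarith
  · push Not at hx
    rw [max_eq_left (by linarith : 0 ≤ x - q), max_eq_right (by linarith : q - x ≤ 0)]
    rcases le_total x r with hr | hr
    · rw [max_eq_right (by linarith : x - r ≤ 0), max_eq_left (by linarith : 0 ≤ r - x)]
      nlinarith
    · rw [max_eq_left (by linarith : 0 ≤ x - r), max_eq_right (by linarith : r - x ≤ 0)]
      linarith

lemma Iio_le (F : Measure ℝ) [IsProbabilityMeasure F] (y t : ℝ)
    (H : ∀ x < y, F.real (Iic x) ≤ t) : F.real (Iio y) ≤ t := by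
  obtain ⟨u, hu, hlt, ht⟩ := exists_seq_strictMono_tendsto y
  have e : ⋃ n, Iic (u n) = Iio y := iUnion_Iic_eq_Iio_of_lt_of_tendsto hlt ht
  have T : Tendsto (fun n => F (Iic (u n))) atTop (𝓝 (F (Iio y))) := by
    rw [← e]
    exact tendsto_measure_iUnion_atTop (fun i j hij => Iic_subset_Iic.2 (hu.monotone hij))
  have T' := (ENNReal.tendsto_toReal (measure_ne_top F (Iio y))).comp T
  exact le_of_tendsto' T' (fun n => H _ (hlt n))

lemma Iio_agree (F G : Measure ℝ) [IsProbabilityMeasure F] [IsProbabilityMeasure G] (lam y : ℝ)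
    (hy : y ≤ lam) (H : ∀ x < lam, F (Iic x) = G (Iic x)) : F.real (Iio y) = G.real (Iio y) := by
  apply le_antisymm
  · apply Iio_le
    intro x hx
    rw [Measure.real, H x (by linarith)]
    exact measureReal_mono (Iic_subset_Iio.2 hx)
  · apply Iio_le
    intro x hx
    rw [Measure.real, ← H x (by linarith)]
    exact measureReal_mono (Iic_subset_Iio.2 hx)

lemma q_nonempty (F : Measure ℝ) [IsProbabilityMeasure F] (t : ℝ) (ht : t < 1) :
    {q : ℝ | t ≤ (F (Iic q)).toReal}.Nonempty := by
  have T := tendsto_measure_Iic_atTop F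
  rw [measure_univ] at T
  have T' := (ENNReal.tendsto_toReal (ENNReal.one_ne_top)).comp T
  obtain ⟨x, hx⟩ := (T'.eventually (lt_mem_nhds (by simpa using ht))).exists
  exact ⟨x, le_of_lt hx⟩

lemma q_lower (F : Measure ℝ) (t : ℝ) (ht : 0 < t) (h0 : F (Iio 0) = 0) :
    ∀ q ∈ {q : ℝ | t ≤ (F (Iic q)).toReal}, 0 ≤ q := by
  intro q hq
  by_contra hn
  push Not at hn
  have : F (Iic q) = 0 := measure_mono_null (Iic_subset_Iio.2 hn) h0
  simp only [mem_ofPred_eq, this, ENNReal.toReal_zero] at hq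
  linarith

lemma quant (F : Measure ℝ) [IsProbabilityMeasure F] (t : ℝ) (ht : 0 < t) (ht1 : t < 1)
    (h0 : F (Iio 0) = 0) :
    0 ≤ qStar t F ∧ t ≤ F.real (Iic (qStar t F)) ∧ F.real (Iio (qStar t F)) ≤ t ∧
      ∀ x, t ≤ F.real (Iic x) → qStar t F ≤ x := by
  unfold qStar
  have hne := q_nonempty F t ht1
  have hlo := q_lower F t ht h0
  have hle : ∀ x, t ≤ F.real (Iic x) → sInf {q : ℝ | t ≤ (F (Iic q)).toReal} ≤ x :=
    fun x hx => csInf_le ⟨0, fun q hq => hlo q hq⟩ hx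
  refine ⟨le_csInf hne hlo, ?_, ?_, hle⟩
  · set u := sInf {q : ℝ | t ≤ (F (Iic q)).toReal}
    have hc : ContinuousWithinAt (cdf F) (Ioi u) u :=
      ((cdf F).right_continuous u).mono Ioi_subset_Ici_self
    rw [← cdf_eq_real]
    refine ge_of_tendsto hc ?_
    filter_upwards [self_mem_nhdsWithin] with x hx
    obtain ⟨y, hy, hyx⟩ := exists_lt_of_csInf_lt hne hx
    rw [cdf_eq_real]
    exact le_trans hy (measureReal_mono (Iic_subset_Iic.2 hyx.le))
  · apply Iio_le
    intro x hx
    by_contra hn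
    push Not at hn
    linarith [hle x hn.le]

lemma hoeff (G : Measure ℝ) [IsProbabilityMeasure G] (N : ℕ) (hN : 1 ≤ N) (ζ δ : ℝ)
    (hδ : δ ∈ Ioo (0 : ℝ) 1)
    (hζ : ζ = Real.sqrt (Real.log (2 / δ) / (2 * N))) (A : Set ℝ) (hA : MeasurableSet A) :
    (Measure.pi fun _ : Fin N => G).real
      {d | ζ ≤ (1 / (N : ℝ)) * ∑ i, A.indicator (fun _ => (1 : ℝ)) (d i) - G.real A} ≤ δ / 2 := by
  have hNp : (0 : ℝ) < N := by exact_mod_cast hN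
  have hf : Measurable (A.indicator (fun _ : ℝ => (1 : ℝ))) := measurable_const.indicator hA
  have hInt : ∫ x, A.indicator (fun _ : ℝ => (1 : ℝ)) x ∂G = G.real A := by
    rw [integral_indicator_const _ hA]; simp
  have hsub : HasSubgaussianMGF (fun x => A.indicator (fun _ : ℝ => (1 : ℝ)) x - G.real A)
      ((‖(1:ℝ) - 0‖₊ / 2) ^ 2) G := by
    rw [← hInt]
    apply hasSubgaussianMGF_of_mem_Icc hf.aemeasurable
    refine ae_of_all _ fun x => ?_
    simp only [indicator]
    split_ifs <;> simp
  have hsub' : ∀ i : Fin N, HasSubgaussianMGF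
      (fun d : Fin N → ℝ => A.indicator (fun _ : ℝ => (1 : ℝ)) (d i) - G.real A)
      ((‖(1:ℝ) - 0‖₊ / 2) ^ 2) (Measure.pi fun _ : Fin N => G) := by
    intro i
    have hmp := measurePreserving_eval (fun _ : Fin N => G) i
    have := HasSubgaussianMGF.of_map (μ := Measure.pi fun _ : Fin N => G) (Y := Function.eval i)
      (X := fun x => A.indicator (fun _ : ℝ => (1 : ℝ)) x - G.real A)
      (c := (‖(1:ℝ) - 0‖₊ / 2) ^ 2) hmp.measurable.aemeasurable (by rw [hmp.map_eq]; exact hsub)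
    exact this
  have hind : iIndepFun (fun (i : Fin N) (d : Fin N → ℝ) =>
      A.indicator (fun _ : ℝ => (1 : ℝ)) (d i) - G.real A) (Measure.pi fun _ : Fin N => G) :=
    iIndepFun_pi (X := fun (_ : Fin N) (x : ℝ) => A.indicator (fun _ : ℝ => (1 : ℝ)) x - G.real A)
      (fun i => (hf.sub_const _).aemeasurable)
  have hlog : 0 ≤ Real.log (2 / δ) := by
    apply Real.log_nonneg
    rw [le_div_iff₀ hδ.1]; linarith [hδ.2]
  have hζ0 : 0 ≤ ζ := by rw [hζ]; exact Real.sqrt_nonneg _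
  have key := HasSubgaussianMGF.measure_sum_ge_le_of_iIndepFun hind (s := Finset.univ)
    (fun i _ => hsub' i) (ε := N * ζ) (by positivity)
  have hsq : ζ ^ 2 = Real.log (2 / δ) / (2 * N) := by
    rw [hζ, Real.sq_sqrt]; positivity
  refine le_trans (le_of_eq ?_) (key.trans (le_of_eq ?_))
  · congr 1
    ext d
    simp only [mem_ofPred_eq, Finset.sum_sub_distrib, Finset.sum_const, Finset.card_univ,
      Fintype.card_fin, nsmul_eq_mul]
    rw [← mul_le_mul_iff_right₀ hNp, mul_sub, ← mul_assoc, mul_one_div_cancel hNp.ne', one_mul]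
  · have : -(N * ζ) ^ 2 / (2 * ((∑ i : Fin N, ((‖(1:ℝ) - 0‖₊ / 2) ^ 2) : NNReal) : ℝ))
        = - Real.log (2 / δ) := by
      rw [mul_pow, hsq]
      simp
      field_simp
    rw [this, Real.exp_neg, Real.exp_log (by have := hδ.1; positivity)]
    rw [inv_div]

/-- `G` before `lam`, with all remaining mass placed at `a`. -/
noncomputable def tailAt (G : Measure ℝ) (lam a : ℝ) : Measure ℝ :=
  G.restrict (Iio lam) + ENNReal.ofReal (1 - G.real (Iio lam)) • Measure.dirac a

lemma tailAt_lt (G : Measure ℝ) (lam a : ℝ) (s : Set ℝ) (hs : MeasurableSet s) (ha : a ∉ s) :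
    tailAt G lam a s = G (s ∩ Iio lam) := by
  simp [tailAt, Measure.restrict_apply hs, Measure.dirac_apply' a hs, ha]

lemma tailAt_ge (G : Measure ℝ) [IsProbabilityMeasure G] (lam a : ℝ) (s : Set ℝ)
    (hs : MeasurableSet s) (ha : a ∈ s) (hsub : Iio lam ⊆ s) :
    tailAt G lam a s = 1 := by
  have h1 : G.real (Iio lam) ≤ 1 := measureReal_le_one
  simp only [tailAt, Measure.add_apply, Measure.restrict_apply hs, Measure.smul_apply,
    Measure.dirac_apply' a hs, ha, indicator_of_mem, Pi.one_apply, smul_eq_mul, mul_one,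
    inter_eq_right.2 hsub]
  rw [← ofReal_measureReal, ← ENNReal.ofReal_add measureReal_nonneg (by linarith)]
  simp

lemma tailAt_mem (ρ M lam a : ℝ) (hρ0 : 0 < ρ) (hρ1 : ρ < 1) (hlam : 0 ≤ lam) (hla : lam ≤ a)
    (haM : a ≤ M) (G : Measure ℝ) (hG : G ∈ GoodDist ρ M) (hg : G.real (Iio lam) < ρ) :
    tailAt G lam a ∈ Ambig ρ M G lam ∧ qStar ρ (tailAt G lam a) = a ∧
    (tailAt G lam a).real (Iic a) = 1 ∧ (tailAt G lam a).real (Iio a) = G.real (Iio lam) := by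
  obtain ⟨hP, h0, hi, hq⟩ := hG
  have hPt : IsProbabilityMeasure (tailAt G lam a) :=
    ⟨tailAt_ge G lam a univ MeasurableSet.univ (mem_univ _) (subset_univ _)⟩
  have ht0 : tailAt G lam a (Iio 0) = 0 := by
    rw [tailAt_lt G lam a _ measurableSet_Iio (by simp; linarith)]
    exact measure_mono_null inter_subset_left h0
  have h1 : (tailAt G lam a).real (Iic a) = 1 := by
    rw [Measure.real, tailAt_ge G lam a _ measurableSet_Iic (by simp)]
    · simp
    · intro x hx; simp at hx ⊢; linarith
  have h2 : (tailAt G lam a).real (Iio a) = G.real (Iio lam) := by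
    rw [Measure.real, tailAt_lt G lam a _ measurableSet_Iio (by simp),
      inter_eq_right.2 (Iio_subset_Iio hla), Measure.real]
  obtain ⟨q0, q1, q2, q3⟩ := quant (tailAt G lam a) ρ hρ0 hρ1 ht0
  have hqa : qStar ρ (tailAt G lam a) = a := by
    apply le_antisymm
    · apply q3; rw [h1]; exact hρ1.le
    · by_contra hn
      push Not at hn
      have := measureReal_mono (μ := tailAt G lam a) (Iic_subset_Iio.2 hn)
      linarith
  refine ⟨⟨⟨hPt, ht0, ?_, by rw [hqa]; exact haM⟩, ?_⟩, hqa, h1, h2⟩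
  · unfold tailAt
    exact hi.restrict.add_measure ((integrable_dirac (by simp)).smul_measure ENNReal.ofReal_ne_top)
  · intro x hx
    rw [tailAt_lt G lam a _ measurableSet_Iic (by simp; linarith),
      inter_eq_left.2 (Iic_subset_Iio.2 hx)]

section core

lemma rho_facts (b h ρ : ℝ) (hb : 0 < b) (hh : 0 < h) (hρ : ρ = b / (b + h)) :
    0 < ρ ∧ ρ < 1 ∧ b = (b + h) * ρ := by
  have : 0 < b + h := by linarith
  refine ⟨by rw [hρ]; positivity, ?_, ?_⟩
  · rw [hρ, div_lt_one this]; linarith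
  · rw [hρ]; field_simp

lemma gap_nonneg (b h ρ M : ℝ) (hb : 0 < b) (hh : 0 < h) (hρ : ρ = b / (b + h))
    (F : Measure ℝ) (hF : F ∈ GoodDist ρ M) (q : ℝ) :
    0 ≤ nvCost b h F q - nvCost b h F (qStar ρ F) := by
  obtain ⟨r0, r1, rb⟩ := rho_facts b h ρ hb hh hρ
  obtain ⟨hP, h0, hi, hq⟩ := hF
  obtain ⟨q0, q1, q2, q3⟩ := quant F ρ r0 r1 h0
  have hbh : 0 < b + h := by linarith
  rcases le_total q (qStar ρ F) with hle | hle
  · have := nv_up b h hb hh F hi _ _ hle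
    have h2 : (b + h) * F.real (Iio (qStar ρ F)) ≤ b := by
      calc _ ≤ (b + h) * ρ := by gcongr
        _ = b := rb.symm
    nlinarith
  · have := nv_dn b h hb hh F hi _ _ hle
    have h2 : b ≤ (b + h) * F.real (Iic (qStar ρ F)) := by
      calc b = (b + h) * ρ := rb
        _ ≤ _ := by gcongr
    nlinarith

lemma regret_nonneg (b h ρ M lam : ℝ) (hb : 0 < b) (hh : 0 < h) (hρ : ρ = b / (b + h))
    (G : Measure ℝ) (q : ℝ) : 0 ≤ Regret b h ρ M G lam q := by
  apply Real.sSup_nonneg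
  rintro _ ⟨F, hF, rfl⟩
  exact gap_nonneg b h ρ M hb hh hρ F hF.1 q

lemma risk_nonneg (b h ρ M lam : ℝ) (hb : 0 < b) (hh : 0 < h) (hρ : ρ = b / (b + h))
    (G : Measure ℝ) : 0 ≤ Risk b h ρ M G lam := by
  apply Real.sInf_nonneg
  rintro _ ⟨q, hq, rfl⟩
  exact regret_nonneg b h ρ M lam hb hh hρ G q

lemma le_regret (b h ρ M lam : ℝ) (hb : 0 < b) (hh : 0 < h) (hρ : ρ = b / (b + h))
    (G : Measure ℝ) (q : ℝ) (hq : q ∈ Icc 0 M) (F : Measure ℝ) (hF : F ∈ Ambig ρ M G lam) :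
    nvCost b h F q - nvCost b h F (qStar ρ F) ≤ Regret b h ρ M G lam q := by
  obtain ⟨r0, r1, rb⟩ := rho_facts b h ρ hb hh hρ
  refine le_csSup ⟨(b + h) * M, ?_⟩ ⟨F, hF, rfl⟩
  rintro _ ⟨F, ⟨⟨hP, h0, hi, hs⟩, -⟩, rfl⟩
  obtain ⟨q0, q1, q2, q3⟩ := quant F ρ r0 r1 h0
  simp only
  have a1 : F.real (Iio q) ≤ 1 := measureReal_le_one
  have a2 : 0 ≤ F.real (Iic q) := measureReal_nonneg
  rcases le_total q (qStar ρ F) with hle | hle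
  · have := nv_dn b h hb hh F hi _ _ hle
    calc _ ≤ _ := this
      _ ≤ (qStar ρ F - q) * (b + h) := by
        apply mul_le_mul_of_nonneg_left _ (by linarith)
        nlinarith
      _ ≤ (b + h) * M := by nlinarith [hq.1]
  · have := nv_up b h hb hh F hi _ _ hle
    calc _ ≤ _ := this
      _ ≤ (q - qStar ρ F) * (b + h) := by
        apply mul_le_mul_of_nonneg_left _ (by linarith)
        nlinarith
      _ ≤ (b + h) * M := by nlinarith [hq.2]

lemma risk_ge (b h ρ M lam : ℝ) (hb : 0 < b) (hh : 0 < h) (hρ : ρ = b / (b + h))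
    (hlam : 0 ≤ lam) (hlM : lam < M)
    (G : Measure ℝ) (hG : G ∈ GoodDist ρ M) (hg : G.real (Iio lam) < ρ) (q0 : ℝ)
    (he : h * (q0 - lam) = (M - q0) * (b - (b + h) * G.real (Iio lam))) :
    h * (q0 - lam) ≤ Risk b h ρ M G lam := by
  obtain ⟨r0, r1, rb⟩ := rho_facts b h ρ hb hh hρ
  apply le_csInf ((nonempty_Icc.2 (by linarith)).image _)
  rintro _ ⟨q, hq, rfl⟩
  have hpos : 0 ≤ b - (b + h) * G.real (Iio lam) := by nlinarith
  obtain ⟨m1, e1, f1, -⟩ := tailAt_mem ρ M lam lam r0 r1 hlam le_rfl hlM.le G hG hg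
  obtain ⟨m2, e2, -, f2⟩ := tailAt_mem ρ M lam M r0 r1 hlam hlM.le le_rfl G hG hg
  have l1 := le_regret b h ρ M lam hb hh hρ G q hq _ m1
  have l2 := le_regret b h ρ M lam hb hh hρ G q hq _ m2
  rw [e1] at l1
  rw [e2] at l2
  have : IsProbabilityMeasure (tailAt G lam lam) := m1.1.1
  have : IsProbabilityMeasure (tailAt G lam M) := m2.1.1
  rcases le_total q q0 with hle | hle
  · have k := nv_up b h hb hh (tailAt G lam M) m2.1.2.2.1 M q hq.2
    rw [f2] at k
    have : (M - q0) * (b - (b + h) * G.real (Iio lam)) ≤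
      (M - q) * (b - (b + h) * G.real (Iio lam)) := by gcongr
    linarith
  · rcases le_total lam q with hl | hl
    · have k := nv_dn b h hb hh (tailAt G lam lam) m1.1.2.2.1 lam q hl
      rw [f1] at k
      nlinarith
    · have := regret_nonneg b h ρ M lam hb hh hρ G q
      nlinarith

lemma regret_le_low (b h ρ M lam : ℝ) (hb : 0 < b) (hh : 0 < h) (hρ : ρ = b / (b + h))
    (G : Measure ℝ) (hG : G ∈ GoodDist ρ M) (hg : G.real (Iio lam) < ρ) (q t : ℝ)
    (hq : lam ≤ q) (hqM : q ≤ M) (t1 : h * (q - lam) ≤ t)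
    (t2 : (M - q) * (b - (b + h) * G.real (Iio lam)) ≤ t) :
    Regret b h ρ M G lam q ≤ t := by
  obtain ⟨r0, r1, rb⟩ := rho_facts b h ρ hb hh hρ
  have hPG : IsProbabilityMeasure G := hG.1
  apply Real.sSup_le _ (by nlinarith)
  rintro _ ⟨F, ⟨⟨hP, h0, hi, hs⟩, hA⟩, rfl⟩
  obtain ⟨q0, q1, q2, q3⟩ := quant F ρ r0 r1 h0
  have hpos : 0 ≤ b - (b + h) * G.real (Iio lam) := by nlinarith
  have hag := Iio_agree F G lam lam le_rfl hA
  have hls : lam ≤ qStar ρ F := by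
    by_contra hn
    push Not at hn
    have := measureReal_mono (μ := F) (Iic_subset_Iio.2 hn)
    linarith
  simp only
  have a1 : F.real (Iio q) ≤ 1 := measureReal_le_one
  have a2 : F.real (Iio lam) ≤ F.real (Iic q) :=
    measureReal_mono (Iio_subset_Iic_self.trans (Iic_subset_Iic.2 hq))
  rcases le_total q (qStar ρ F) with hle | hle
  · have := nv_dn b h hb hh F hi _ _ hle
    calc _ ≤ _ := this
      _ ≤ (qStar ρ F - q) * (b - (b + h) * G.real (Iio lam)) := by
        apply mul_le_mul_of_nonneg_left _ (by linarith)
        rw [← hag]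
        nlinarith
      _ ≤ (M - q) * (b - (b + h) * G.real (Iio lam)) := by gcongr
      _ ≤ t := t2
  · have := nv_up b h hb hh F hi _ _ hle
    calc _ ≤ _ := this
      _ ≤ (q - qStar ρ F) * h := by
        apply mul_le_mul_of_nonneg_left _ (by linarith)
        nlinarith
      _ ≤ t := by nlinarith

lemma regret_le_high (b h ρ M lam : ℝ) (hb : 0 < b) (hh : 0 < h) (hρ : ρ = b / (b + h))
    (hlam : 0 ≤ lam)
    (G : Measure ℝ) (hG : G ∈ GoodDist ρ M) (hg : ρ ≤ G.real (Iio lam)) (q t : ℝ)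
    (ht : 0 ≤ t) (hq : 0 ≤ q) (hqM : q ≤ lam) (t1 : G.real (Iio q) ≤ ρ + t)
    (t2 : q < lam → ρ - t ≤ G.real (Iic q)) :
    Regret b h ρ M G lam q ≤ lam * (b + h) * t := by
  obtain ⟨r0, r1, rb⟩ := rho_facts b h ρ hb hh hρ
  have hPG : IsProbabilityMeasure G := hG.1
  have hbt : 0 ≤ (b + h) * t := by positivity
  apply Real.sSup_le _ (by positivity)
  rintro _ ⟨F, ⟨⟨hP, h0, hi, hs⟩, hA⟩, rfl⟩
  obtain ⟨q0, q1, q2, q3⟩ := quant F ρ r0 r1 h0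
  have hls : qStar ρ F ≤ lam := by
    apply q3
    rw [← Iio_agree F G lam lam le_rfl hA] at hg
    exact hg.trans (measureReal_mono Iio_subset_Iic_self)
  simp only
  rcases lt_or_ge q (qStar ρ F) with hle | hle
  · have := nv_dn b h hb hh F hi _ _ hle.le
    have h3 := t2 (by linarith)
    have h4 : F.real (Iic q) = G.real (Iic q) := by
      rw [Measure.real, hA q (by linarith), Measure.real]
    calc _ ≤ _ := this
      _ ≤ (qStar ρ F - q) * ((b + h) * t) := by
        apply mul_le_mul_of_nonneg_left _ (by linarith)
        rw [h4]
        nlinarith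
      _ ≤ lam * ((b + h) * t) := by gcongr; linarith
      _ = _ := by ring
  · have := nv_up b h hb hh F hi _ _ hle
    rw [Iio_agree F G lam q hqM hA] at this
    calc _ ≤ _ := this
      _ ≤ (q - qStar ρ F) * ((b + h) * t) := by
        apply mul_le_mul_of_nonneg_left _ (by linarith)
        nlinarith
      _ ≤ lam * ((b + h) * t) := by gcongr; linarith
      _ = _ := by ring

end core

lemma frac1 (ρ g γ ζ : ℝ) (hρ : ρ < 1) (hg : g < ρ) (hγ : γ < ρ) (hd : |γ - g| ≤ ζ) :
    (1 - ρ) * ((ρ - γ) / (1 - γ)) ≤ (1 - ρ) * ((ρ - g) / (1 - g)) + ζ := by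
  have h1 : 0 < 1 - γ := by linarith
  have h2 : 0 < 1 - g := by linarith
  have e : (1 - ρ) * ((ρ - γ) / (1 - γ)) - (1 - ρ) * ((ρ - g) / (1 - g)) =
      ((1 - ρ) / (1 - γ)) * ((1 - ρ) / (1 - g)) * (g - γ) := by
    field_simp; ring
  have a1 : (1 - ρ) / (1 - γ) ≤ 1 := by rw [div_le_one h1]; linarith
  have a2 : (1 - ρ) / (1 - g) ≤ 1 := by rw [div_le_one h2]; linarith
  have b1 : 0 ≤ (1 - ρ) / (1 - γ) := div_nonneg (by linarith) h1.le
  have b2 : 0 ≤ (1 - ρ) / (1 - g) := div_nonneg (by linarith) h2.le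
  have : ((1 - ρ) / (1 - γ)) * ((1 - ρ) / (1 - g)) * (g - γ) ≤ 1 * ζ := by
    calc _ ≤ ((1 - ρ) / (1 - γ)) * ((1 - ρ) / (1 - g)) * |γ - g| := by
          gcongr; rw [abs_sub_comm]; exact le_abs_self _
      _ ≤ 1 * ζ := by
          gcongr
          exact mul_le_one₀ a1 b2 a2
  linarith

lemma frac2 (ρ g γ ζ : ℝ) (hρ : ρ < 1) (hg : g < ρ) (hγ : γ < ρ) (hd : |γ - g| ≤ ζ) :
    (1 - ρ) / (1 - γ) * (ρ - g) ≤ (1 - ρ) * ((ρ - g) / (1 - g)) + ζ := by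
  have h1 : 0 < 1 - γ := by linarith
  have h2 : 0 < 1 - g := by linarith
  have e : (1 - ρ) / (1 - γ) * (ρ - g) - (1 - ρ) * ((ρ - g) / (1 - g)) =
      ((1 - ρ) / (1 - γ)) * ((ρ - g) / (1 - g)) * (γ - g) := by
    field_simp; ring
  have a1 : (1 - ρ) / (1 - γ) ≤ 1 := by rw [div_le_one h1]; linarith
  have a2 : (ρ - g) / (1 - g) ≤ 1 := by rw [div_le_one h2]; linarith
  have b1 : 0 ≤ (1 - ρ) / (1 - γ) := div_nonneg (by linarith) h1.le
  have b2 : 0 ≤ (ρ - g) / (1 - g) := div_nonneg (by linarith) h2.le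
  have : ((1 - ρ) / (1 - γ)) * ((ρ - g) / (1 - g)) * (γ - g) ≤ 1 * ζ := by
    calc _ ≤ ((1 - ρ) / (1 - γ)) * ((ρ - g) / (1 - g)) * |γ - g| := by
          gcongr; exact le_abs_self _
      _ ≤ 1 * ζ := by
          gcongr
          exact mul_le_one₀ a1 b2 a2
  linarith

lemma branch2 (b h ρ M lam ζ γ : ℝ) (hb : 0 < b) (hh : 0 < h) (hρ : ρ = b / (b + h))
    (hlam : 0 ≤ lam) (hlM : lam < M)
    (G : Measure ℝ) (hG : G ∈ GoodDist ρ M) (hg : G.real (Iio lam) < ρ)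
    (hγ : γ < ρ) (hd : |γ - G.real (Iio lam)| ≤ ζ) :
    Regret b h ρ M G lam
      ((b * M + h * lam - (b + h) * γ * M) / ((b + h) * (1 - γ))) ≤
      Risk b h ρ M G lam + (M - lam) * (b + h) * ζ := by
  obtain ⟨r0, r1, rb⟩ := rho_facts b h ρ hb hh hρ
  have key : ∀ x < ρ, ((b * M + h * lam - (b + h) * x * M) / ((b + h) * (1 - x))) =
      lam + (M - lam) * ((ρ - x) / (1 - x)) := by
    intro x hx
    have : (1 - x) ≠ 0 := by linarith
    rw [hρ]
    field_simp
    ring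
  have hL : 0 < M - lam := by linarith
  have hK : 0 < b + h := by linarith
  have rh : h = (b + h) * (1 - ρ) := by linarith
  have om : ∀ x < ρ, 1 - (ρ - x) / (1 - x) = (1 - ρ) / (1 - x) := by
    intro x hx
    have : (1 - x) ≠ 0 := by linarith
    field_simp; ring
  rw [key γ hγ]
  set g := G.real (Iio lam) with hgdef
  have hr := risk_ge b h ρ M lam hb hh hρ hlam hlM G hG hg (lam + (M - lam) * ((ρ - g) / (1 - g)))
    (by
      rw [← hgdef]
      have : (1 - g) ≠ 0 := by linarith
      have e1 : b - (b + h) * g = (b + h) * (ρ - g) := by linarith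
      have e2 : M - (lam + (M - lam) * ((ρ - g) / (1 - g))) =
        (M - lam) * ((1 - ρ) / (1 - g)) := by rw [← om g hg]; ring
      rw [e1, e2]
      calc _ = ((b + h) * (1 - ρ)) * (lam + (M - lam) * ((ρ - g) / (1 - g)) - lam) := by rw [← rh]
        _ = _ := by ring)
  have c1 : 0 ≤ (ρ - γ) / (1 - γ) := div_nonneg (by linarith) (by linarith)
  have c2 : (ρ - γ) / (1 - γ) ≤ 1 := by rw [div_le_one (by linarith)]; linarith
  have hLK : 0 ≤ (M - lam) * (b + h) := by positivity
  have hr' : (M - lam) * (b + h) * ((1 - ρ) * ((ρ - g) / (1 - g))) ≤ Risk b h ρ M G lam := by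
    refine le_trans (le_of_eq ?_) hr
    calc _ = ((b + h) * (1 - ρ)) * (lam + (M - lam) * ((ρ - g) / (1 - g)) - lam) := by ring
      _ = _ := by rw [← rh]
  apply regret_le_low b h ρ M lam hb hh hρ G hG hg
  · nlinarith
  · nlinarith
  · have := mul_le_mul_of_nonneg_left (frac1 ρ g γ ζ r1 hg hγ hd) hLK
    calc _ = ((b + h) * (1 - ρ)) * (lam + (M - lam) * ((ρ - γ) / (1 - γ)) - lam) := by rw [← rh]
      _ = (M - lam) * (b + h) * ((1 - ρ) * ((ρ - γ) / (1 - γ))) := by ring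
      _ ≤ _ := by linarith
  · have := mul_le_mul_of_nonneg_left (frac2 ρ g γ ζ r1 hg hγ hd) hLK
    rw [← hgdef]
    have e1 : b - (b + h) * g = (b + h) * (ρ - g) := by linarith
    have e2 : M - (lam + (M - lam) * ((ρ - γ) / (1 - γ))) =
        (M - lam) * ((1 - ρ) / (1 - γ)) := by rw [← om γ hγ]; ring
    rw [e1, e2]
    calc _ = (M - lam) * (b + h) * ((1 - ρ) / (1 - γ) * (ρ - g)) := by ring
      _ ≤ _ := by linarith

/-- Empirical frequency of the set `A`. -/
noncomputable def emp {N : ℕ} (d : Fin N → ℝ) (A : Set ℝ) : ℝ :=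
  (1 / (N : ℝ)) * ∑ i, A.indicator (fun _ => (1 : ℝ)) (d i)

lemma ghat_eq (lam : ℝ) {N : ℕ} (d : Fin N → ℝ) : ghat lam d = emp d (Iio lam) := by
  unfold ghat emp
  congr 1
  apply Finset.sum_congr rfl
  intro i _
  simp [indicator]

lemma emp_compl {N : ℕ} (hN : 1 ≤ N) (d : Fin N → ℝ) (A : Set ℝ) :
    emp d Aᶜ = 1 - emp d A := by
  have hNp : (0 : ℝ) < N := by exact_mod_cast hN
  unfold emp
  have : ∀ i, Aᶜ.indicator (fun _ => (1 : ℝ)) (d i) = 1 - A.indicator (fun _ => (1 : ℝ)) (d i) := by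
    intro i
    by_cases hi : d i ∈ A <;> simp [hi]
  simp_rw [this, Finset.sum_sub_distrib]
  simp
  field_simp

lemma emp_quant (ρ lam : ℝ) (r0 : 0 < ρ) (r1 : ρ < 1) (hlam : 0 ≤ lam) {N : ℕ} (hN : 1 ≤ N)
    (d : Fin N → ℝ) (hd : ∀ i, 0 ≤ d i) (q : ℝ)
    (hq : q = sInf {x : ℝ | ρ ≤ (1 / (N : ℝ)) * ∑ i, (if min (d i) lam ≤ x then (1 : ℝ) else 0)}) :
    0 ≤ q ∧ q ≤ lam ∧ (∀ x, ρ ≤ emp d (Iic x) → q ≤ x) ∧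
      (∀ l ≤ lam, emp d (Iio l) < ρ → l ≤ q) := by
  have hNp : (0 : ℝ) < N := by exact_mod_cast hN
  set S := {x : ℝ | ρ ≤ (1 / (N : ℝ)) * ∑ i, (if min (d i) lam ≤ x then (1 : ℝ) else 0)} with hS
  have hlow : ∀ x ∈ S, 0 ≤ x := by
    intro x hx
    by_contra hn
    push Not at hn
    have hz : ∀ i, (if min (d i) lam ≤ x then (1 : ℝ) else 0) = 0 := by
      intro i
      rw [if_neg]
      have := le_min (hd i) hlam
      linarith
    simp only [hS, mem_ofPred_eq, hz, Finset.sum_const_zero, mul_zero] at hx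
    linarith
  have hbdd : BddBelow S := ⟨0, hlow⟩
  have hlS : lam ∈ S := by
    simp only [hS, mem_ofPred_eq, min_le_right, if_true]
    simp
    rw [inv_mul_cancel₀ hNp.ne']
    exact r1.le
  have hne : S.Nonempty := ⟨lam, hlS⟩
  refine ⟨?_, ?_, ?_, ?_⟩
  · rw [hq]; exact le_csInf hne hlow
  · rw [hq]; exact csInf_le hbdd hlS
  · intro x hx
    rw [hq]
    apply csInf_le hbdd
    refine le_trans hx ?_
    unfold emp
    gcongr with i
    by_cases hi : d i ≤ x
    · simp [hi]
    · simp [hi]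
      split_ifs <;> norm_num
  · intro l hl he
    rw [hq]
    apply le_csInf hne
    intro x hx
    by_contra hn
    push Not at hn
    have : (1 / (N : ℝ)) * ∑ i, (if min (d i) lam ≤ x then (1 : ℝ) else 0) ≤ emp d (Iio l) := by
      unfold emp
      gcongr with i
      by_cases hi : d i < l
      · simp [hi]
        split_ifs <;> norm_num
      · have h1 : ¬ min (d i) lam ≤ x := by
          push Not at hi ⊢
          exact lt_of_lt_of_le hn (le_min hi hl)
        rw [if_neg h1]
        simp [hi]
    have hx' : ρ ≤ _ := hx
    linarith

lemma core (b h M lam ρ : ℝ) (hb : 0 < b) (hh : 0 < h)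
    (hlam : 0 ≤ lam) (hρ : ρ = b / (b + h))
    (G : Measure ℝ) (hG : G ∈ GoodDist ρ M)
    (hpath : (G (Iio lam)).toReal < ρ → lam < M)
    (N : ℕ) (hN : 1 ≤ N) (ζ : ℝ) (hζ : 0 < ζ) (d : Fin N → ℝ) (hd : ∀ i, 0 ≤ d i)
    (E1 : |emp d (Iio lam) - G.real (Iio lam)| < ζ)
    (E2 : G.real (Iic (qStar (ρ + ζ) G)) - ζ < emp d (Iic (qStar (ρ + ζ) G)))
    (E3 : emp d (Iio (qStar (ρ - ζ) G)) < G.real (Iio (qStar (ρ - ζ) G)) + ζ) :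
    Regret b h ρ M G lam (qalg b h M lam ρ ζ d) ≤
          Risk b h ρ M G lam + rcnBound b h M lam ρ ζ ((G (Iio lam)).toReal) := by
  obtain ⟨r0, r1, rb⟩ := rho_facts b h ρ hb hh hρ
  have hPG : IsProbabilityMeasure G := hG.1
  have hrisk := risk_nonneg b h ρ M lam hb hh hρ G
  change _ ≤ _ + rcnBound b h M lam ρ ζ (G.real (Iio lam))
  change G.real (Iio lam) < ρ → lam < M at hpath
  unfold qalg
  rw [ghat_eq]
  set γ := emp d (Iio lam) with hγ
  set g := G.real (Iio lam) with hg
  have hK : 0 < b + h := by linarith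
  obtain ⟨E1a, E1b⟩ := abs_lt.1 E1
  rcases le_or_gt ρ g with hgr | hgr
  · -- identifiable
    have hbr : (if ρ + 2 * ζ ≤ g then (1 : ℝ) else 2) * (lam * (b + h) * ζ) =
        rcnBound b h M lam ρ ζ g := by
      unfold rcnBound
      split_ifs <;> ring
    rw [← hbr]
    have hX : 0 ≤ lam * (b + h) * ζ := by positivity
    have hB1 : Regret b h ρ M G lam
        (sInf {x : ℝ | ρ ≤ (1 / (N : ℝ)) * ∑ i, (if min (d i) lam ≤ x then (1 : ℝ) else 0)})
        ≤ lam * (b + h) * ζ := by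
      obtain ⟨p0, p1, p2, p3⟩ := emp_quant ρ lam r0 r1 hlam hN d hd _ rfl
      set q := sInf {x : ℝ | ρ ≤ (1 / (N : ℝ)) *
        ∑ i, (if min (d i) lam ≤ x then (1 : ℝ) else 0)}
      apply regret_le_high b h ρ M lam hb hh hρ hlam G hG hgr q ζ hζ.le p0 p1
      · rcases lt_or_ge (ρ + ζ) 1 with h1 | h1
        · obtain ⟨q0, q1, q2, q3⟩ := quant G (ρ + ζ) (by linarith) h1 hG.2.1
          have := p2 (qStar (ρ + ζ) G) (by linarith)
          exact (measureReal_mono (Iio_subset_Iio this)).trans q2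
        · have : G.real (Iio q) ≤ 1 := measureReal_le_one
          linarith
      · intro _
        rcases lt_or_ge 0 (ρ - ζ) with h1 | h1
        · obtain ⟨q0, q1, q2, q3⟩ := quant G (ρ - ζ) h1 (by linarith) hG.2.1
          have hll : qStar (ρ - ζ) G ≤ lam := by
            apply q3
            have : G.real (Iio lam) ≤ G.real (Iic lam) := measureReal_mono Iio_subset_Iic_self
            linarith
          have := p3 (qStar (ρ - ζ) G) hll (by linarith)
          exact q1.trans (measureReal_mono (Iic_subset_Iic.2 this))
        · have : 0 ≤ G.real (Iic q) := measureReal_nonneg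
          linarith
    have hB3 : g < ρ + 2 * ζ → Regret b h ρ M G lam lam ≤ lam * (b + h) * (2 * ζ) := by
      intro h1
      exact regret_le_high b h ρ M lam hb hh hρ hlam G hG hgr lam (2 * ζ) (by linarith) hlam le_rfl
        h1.le (fun h2 => absurd h2 (lt_irrefl _))
    by_cases h1 : ρ + ζ ≤ γ
    · rw [if_pos h1]
      split_ifs <;> linarith
    · rw [if_neg h1, if_neg (by linarith), if_neg (by linarith)]
      have := hB3 (by linarith)
      linarith
  · have hlM := hpath hgr
    have hL : 0 < M - lam := by linarith
    have hmax : 1 ≤ max (b / h) 1 := le_max_right _ _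
    have hX : 0 ≤ (M - lam) * (b + h) * ζ := by positivity
    have hbr : max (b / h) 1 * (if ρ - 2 * ζ ≤ g then (2 : ℝ) else 1) * ((M - lam) * (b + h) * ζ) =
        rcnBound b h M lam ρ ζ g := by
      have n1 : ¬ (ρ + 2 * ζ ≤ g) := by linarith
      have n2 : ¬ (ρ ≤ g) := by linarith
      simp only [rcnBound, n1, n2, if_false]
      split_ifs <;> ring
    rw [← hbr]
    rw [if_neg (by linarith)]
    split_ifs with h1 h2 h2
    · have := branch2 b h ρ M lam ζ γ hb hh hρ hlam hlM G hG hgr (by linarith) E1.le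
      nlinarith
    · have := branch2 b h ρ M lam ζ γ hb hh hρ hlam hlM G hG hgr (by linarith) E1.le
      nlinarith
    · have : Regret b h ρ M G lam lam ≤ 2 * ((M - lam) * (b + h) * ζ) := by
        apply regret_le_low b h ρ M lam hb hh hρ G hG hgr _ _ le_rfl hlM.le
        · nlinarith
        · rw [← hg]
          calc _ ≤ (M - lam) * ((b + h) * (2 * ζ)) := by
                apply mul_le_mul_of_nonneg_left _ hL.le
                nlinarith
            _ = _ := by ring
      nlinarith
    · exfalso; linarith

/-- with probability at least `1 - 2δ`, the worst-case regret of the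
RCN algorithm output is at most `Δ` plus the regime-dependent finite-sample term. -/
theorem stmt16 (b h M lam ρ : ℝ) (hb : 0 < b) (hh : 0 < h) (hM : 0 < M)
    (hlam : 0 ≤ lam) (hρ : ρ = b / (b + h))
    (G : Measure ℝ) (hG : G ∈ GoodDist ρ M)
    (hpath : (G (Iio lam)).toReal < ρ → lam < M)
    (N : ℕ) (hN : 1 ≤ N) (δ : ℝ) (hδ : δ ∈ Ioo (0 : ℝ) 1)
    (ζ : ℝ) (hζ : ζ = Real.sqrt (Real.log (2 / δ) / (2 * N))) :
    ENNReal.ofReal (1 - 2 * δ) ≤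
      iidPi N G {d : Fin N → ℝ |
        Regret b h ρ M G lam (qalg b h M lam ρ ζ d) ≤
          Risk b h ρ M G lam + rcnBound b h M lam ρ ζ ((G (Iio lam)).toReal)} := by
  obtain ⟨hPG, h0, hi, hq⟩ := hG
  have hmu : iidPi N G = Measure.pi fun _ : Fin N => G := by
    unfold iidPi
    rw [dif_pos (inferInstance : SigmaFinite G)]
  rw [hmu]
  have hNp : (0 : ℝ) < N := by exact_mod_cast hN
  have hζ0 : 0 < ζ := by
    rw [hζ]
    apply Real.sqrt_pos.2
    apply div_pos _ (by positivity)
    apply Real.log_pos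
    rw [lt_div_iff₀ hδ.1]
    linarith [hδ.2]
  have H : ∀ A, MeasurableSet A → (Measure.pi fun _ : Fin N => G).real
      {d | ζ ≤ emp d A - G.real A} ≤ δ / 2 := fun A hA => hoeff G N hN ζ δ hδ hζ A hA
  set P := Measure.pi fun _ : Fin N => G with hP
  set u := qStar (ρ + ζ) G
  set l := qStar (ρ - ζ) G
  set good := {d : Fin N → ℝ | Regret b h ρ M G lam (qalg b h M lam ρ ζ d) ≤
          Risk b h ρ M G lam + rcnBound b h M lam ρ ζ ((G (Iio lam)).toReal)} with hgood
  set Z := {d : Fin N → ℝ | ¬ ∀ i, 0 ≤ d i} with hZ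
  have hZ0 : P.real Z = 0 := by
    have hae : ∀ᵐ d ∂P, ∀ i, 0 ≤ d i := by
      rw [ae_all_iff]
      intro i
      have hG0 : ∀ᵐ x ∂G, 0 ≤ x := by
        rw [ae_iff]
        convert h0 using 2
        ext x
        simp
      exact (measurePreserving_eval (fun _ : Fin N => G) i).quasiMeasurePreserving.ae hG0
    rw [Measure.real, ae_iff.1 hae]
    simp
  have k1 := H (Iio lam) measurableSet_Iio
  have k2 := H (Iio lam)ᶜ measurableSet_Iio.compl
  have k3 := H (Iic u)ᶜ measurableSet_Iic.compl
  have k4 := H (Iio l) measurableSet_Iio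
  set B1 := {d : Fin N → ℝ | ζ ≤ emp d (Iio lam) - G.real (Iio lam)} with hB1
  set B2 := {d : Fin N → ℝ | ζ ≤ emp d (Iio lam)ᶜ - G.real (Iio lam)ᶜ} with hB2
  set B3 := {d : Fin N → ℝ | ζ ≤ emp d (Iic u)ᶜ - G.real (Iic u)ᶜ} with hB3
  set B4 := {d : Fin N → ℝ | ζ ≤ emp d (Iio l) - G.real (Iio l)} with hB4
  have hcov : (univ : Set (Fin N → ℝ)) ⊆ good ∪ (Z ∪ (B1 ∪ (B2 ∪ (B3 ∪ B4)))) := by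
    intro d _
    by_contra hn
    simp only [mem_union, not_or] at hn
    obtain ⟨n0, nz, n1, n2, n3, n4⟩ := hn
    simp only [hZ, hB1, hB2, hB3, hB4, mem_ofPred_eq, not_not, not_le] at nz n1 n2 n3 n4
    rw [emp_compl hN, probReal_compl_eq_one_sub measurableSet_Iio] at n2
    rw [emp_compl hN, probReal_compl_eq_one_sub measurableSet_Iic] at n3
    exact n0 (core b h M lam ρ hb hh hlam hρ G ⟨hPG, h0, hi, hq⟩ hpath N hN ζ hζ0 d nz
      (abs_lt.2 ⟨by linarith, by linarith⟩) (by linarith) (by linarith))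
  have hu : P.real univ = 1 := probReal_univ
  have c0 := measureReal_mono (μ := P) hcov
  have c1 := measureReal_union_le (μ := P) good (Z ∪ (B1 ∪ (B2 ∪ (B3 ∪ B4))))
  have c2 := measureReal_union_le (μ := P) Z (B1 ∪ (B2 ∪ (B3 ∪ B4)))
  have c3 := measureReal_union_le (μ := P) B1 (B2 ∪ (B3 ∪ B4))
  have c4 := measureReal_union_le (μ := P) B2 (B3 ∪ B4)
  have c5 := measureReal_union_le (μ := P) B3 B4
  have hfin : 1 - 2 * δ ≤ P.real good := by linarith
  exact ENNReal.ofReal_le_of_le_toReal hfin
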